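/- Fix an integer m ≥ 4. Then the number of multisets b of natural numbers with card b = 2m − 2 and ∑_{i ∈ b} 2^i = 2^m is at most the number of multisets b of natural numbers with card b = 2m − 1 and ∑_{i ∈ b} 2^i = 2^m. -/

import Mathlib

/-!
An expansion of `2 ^ m` is reached from `2 ^ m` by halving terms, the largest first; if `x_i` terms
are halved in the `i`-th round, then `x₁ ≤ 1`, `x_{i+1} ≤ 2 x_i`, and each halving lengthens the
expansion by one. Let `f_{k,w} n` count such sequences of length `k` with `x₁ ≤ w` and total `n`.
For `w ≥ 2` we show, by strong induction on `k`, that `f_{k,w} a ≤ f_{k,w} b` whenever `a ≤ b` and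
`a + b ≤ 4 k - 3`.

In the recursion `f_{k+1,w} n = ∑_{x ≤ w} f_{k,2x} (n - x)` the bound has to grow by `4`, and
translation by `x` raises it by `2 x`. So the terms with `x ≥ 2` are harmless, and only `x = 1`
(together with `x = 0`, which contributes just at `n = 0`) is deficient. Terms with `x ≥ 3` have
room to spare: splitting them off reduces everything to `w = 2`, and also makes up for the
deficiency there. Unrolling the recursion three times, the sequences beginning `x, y, z` give
`f_{k+1,2z} (n - x - y - z)`. These are split into `f_{k+1,2}` and the surplus, and regrouped into
sums over intervals of consecutive translates; such a sum gains twice the centre of the interval.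
The sequences in which one of `x, y, z` vanishes contribute two indicator functions, of `[0, 7)` and
`[2, 4)`, each of which is absorbed by a group that becomes positive where the indicator drops.
One more step of the recursion gives the bound `4 m - 5` for `f_{m,1}`, which just allows
`a = 2 m - 3` and `b = 2 m - 2`.
-/

open Finset

/-- `ReflectMono κ f` says that `f a ≤ f b` whenever `b` lies between `a` and its mirror image
`κ - a`. Unlike monotonicity up to `κ / 2`, this passes to a sum of consecutive translates of `f`
with `κ` increased by twice the mean translation. -/
def ReflectMono {M : Type*} [LE M] (κ : ℤ) (f : ℤ → M) : Prop :=
  ∀ ⦃a b : ℤ⦄, a ≤ b → a + b ≤ κ → f a ≤ f b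

/-- The sum of the `L` translates of `f` by `c, c + 1, …, c + L - 1`. -/
def translateSum {M : Type*} [AddCommMonoid M] (f : ℤ → M) (c : ℤ) (L : ℕ) (n : ℤ) : M :=
  ∑ t ∈ range L, f (n - c - t)

namespace ReflectMono

lemma of_le {M : Type*} [LE M] {κ κ' : ℤ} {f : ℤ → M} (hf : ReflectMono κ f) (hκ : κ' ≤ κ) :
    ReflectMono κ' f :=
  fun _ _ hab h => hf hab (h.trans hκ)

lemma comp_sub {M : Type*} [LE M] {κ κ' : ℤ} {f : ℤ → M} (hf : ReflectMono κ f) (c : ℤ)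
    (hκ : κ' ≤ κ + 2 * c) : ReflectMono κ' fun n => f (n - c) :=
  fun _ _ hab h => hf (by omega) (by omega)

section OrderedAddMonoid

variable {M : Type*} [AddCommMonoid M] [PartialOrder M] [IsOrderedAddMonoid M] {κ κ' : ℤ}
  {f g : ℤ → M}

lemma add (hf : ReflectMono κ f) (hg : ReflectMono κ g) : ReflectMono κ (f + g) :=
  fun _ _ hab h => add_le_add (hf hab h) (hg hab h)

lemma sum {ι : Type*} {s : Finset ι} {f : ι → ℤ → M} (hf : ∀ i ∈ s, ReflectMono κ (f i)) :
    ReflectMono κ fun n => ∑ i ∈ s, f i n :=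
  fun _ _ hab h => sum_le_sum fun i hi => hf i hi hab h

/- Pair the lowest point of the window ending at `a` with the highest point of the window ending
at `b`; what remains are two windows of length `L` ending at `a` and `b - 1`. -/
lemma sum_range_sub (hf : ReflectMono κ f) (L : ℕ) :
    ReflectMono (κ + L - 1) fun n => ∑ t ∈ range L, f (n - t) := by
  induction L with
  | zero => intro a b _ _; simp
  | succ L ih =>
    intro a b hab h
    push_cast at h
    obtain rfl | hlt := hab.eq_or_lt
    · rfl
    have htop : ∑ t ∈ range (L + 1), f (b - t) = ∑ t ∈ range L, f (b - 1 - t) + f b := by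
      simp [sum_range_succ', sub_sub, add_comm]
    calc ∑ t ∈ range (L + 1), f (a - t)
        = ∑ t ∈ range L, f (a - t) + f (a - L) := sum_range_succ _ L
      _ ≤ ∑ t ∈ range L, f (b - 1 - t) + f b :=
          add_le_add (ih (by omega) (by omega)) (hf (by omega) (by omega))
      _ = ∑ t ∈ range (L + 1), f (b - t) := htop.symm

lemma translateSum (hf : ReflectMono κ f) (c : ℤ) (L : ℕ) (hκ : κ' ≤ κ + 2 * c + L - 1) :
    ReflectMono κ' (translateSum f c L) :=
  (hf.sum_range_sub L).comp_sub c (by omega)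

end OrderedAddMonoid

lemma indicator_Ico_add {κ p q : ℤ} {g : ℤ → ℕ} (hg : ReflectMono κ g)
    (hzero : ∀ n < q, g n = 0) (hpos : ∀ n, q ≤ n → n ≤ κ - p → 0 < g n) :
    ReflectMono κ ((Set.Ico p q).indicator 1 + g) := by
  intro a b hab h
  have hgab := hg hab h
  have hga := hzero a
  have hgb := hpos b
  simp only [Pi.add_apply, Set.indicator_apply, Set.mem_Ico, Pi.one_apply]
  split_ifs <;> omega

end ReflectMono

/-- The number of sequences `x₁, …, x_k` of naturals with `x₁ ≤ w`, `x_{i+1} ≤ 2 x_i` and total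
`n`. Equivalently, the number of ways of splitting `w` copies of `2 ^ k` into powers of two by `n`
halvings, `x_i` of which replace a `2 ^ (k + 1 - i)`. -/
def splitCount : ℕ → ℕ → ℤ → ℕ
  | 0, _, n => if n = 0 then 1 else 0
  | k + 1, w, n => ∑ x ∈ range (w + 1), splitCount k (2 * x) (n - x)

/-- The part of `splitCount (k + 1) w` counting sequences whose first entry is at least three. -/
def wideSplitCount (k w : ℕ) (n : ℤ) : ℕ :=
  ∑ x ∈ Ico 3 (w + 1), splitCount k (2 * x) (n - x)

lemma splitCount_zero (w : ℕ) (n : ℤ) : splitCount 0 w n = if n = 0 then 1 else 0 := rfl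

lemma splitCount_of_neg (k w : ℕ) {n : ℤ} (hn : n < 0) : splitCount k w n = 0 := by
  induction k generalizing w n with
  | zero => simp [splitCount, hn.ne]
  | succ k ih => exact sum_eq_zero fun x _ => ih _ (by omega)

lemma splitCount_zero_right (k : ℕ) (n : ℤ) : splitCount k 0 n = if n = 0 then 1 else 0 := by
  induction k with
  | zero => rfl
  | succ k ih => simp [splitCount, ih]

lemma splitCount_le_succ {k x w : ℕ} (hx : x ≤ w) (n : ℤ) :
    splitCount k (2 * x) (n - x) ≤ splitCount (k + 1) w n :=
  single_le_sum (f := fun x : ℕ => splitCount k (2 * x) (n - x)) (fun _ _ => Nat.zero_le _)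
    (mem_range.2 (by omega))

lemma splitCount_pos (k w : ℕ) {n : ℤ} (hn : 0 ≤ n) (hle : n + w ≤ w * 2 ^ k) :
    0 < splitCount k w n := by
  induction k generalizing w n with
  | zero => simp [splitCount, show n = 0 by omega]
  | succ k ih =>
    obtain hw | hw := le_total (w : ℤ) n
    · refine (ih (2 * w) (by omega) ?_).trans_le (splitCount_le_succ le_rfl n)
      push_cast
      rw [pow_succ] at hle
      linarith
    · lift n to ℕ using hn
      refine (ih (2 * n) (by omega) ?_).trans_le (splitCount_le_succ (by omega) n)
      have : (2 * n : ℤ) ≤ 2 * n * 2 ^ k :=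
        le_mul_of_one_le_right (by omega) (one_le_pow₀ one_le_two)
      push_cast
      linarith

lemma splitCount_succ_eq_add_wideSplitCount (k : ℕ) {w : ℕ} (hw : 2 ≤ w) (n : ℤ) :
    splitCount (k + 1) w n = splitCount (k + 1) 2 n + wideSplitCount k w n :=
  (sum_range_add_sum_Ico _ (by omega)).symm

lemma splitCount_succ_eq_ite_add (k w : ℕ) (n : ℤ) :
    splitCount (k + 1) w n = (if n = 0 then 1 else 0) +
      ∑ x ∈ Ico 1 (w + 1), splitCount k (2 * x) (n - x) := by
  simp [splitCount, sum_range_eq_add_Ico, splitCount_zero_right]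

lemma splitCount_succ_one (k : ℕ) :
    splitCount (k + 1) 1 = (Set.Ico 0 1).indicator 1 + fun n => splitCount k 2 (n - 1) := by
  ext n
  simp [splitCount_succ_eq_ite_add, Set.indicator_apply, show (0 ≤ n ∧ n < 1) ↔ n = 0 by omega]

lemma splitCount_two_two :
    splitCount 2 2 = (Set.Ico 0 7).indicator 1 + (Set.Ico 2 4).indicator 1 := by
  ext n
  simp only [Set.indicator_apply, Set.mem_Ico, Pi.add_apply, Pi.one_apply]
  by_cases hn : 0 ≤ n ∧ n < 7
  · obtain ⟨h0, h7⟩ := hn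
    interval_cases n <;> decide
  · simp only [splitCount, sum_range_succ, sum_range_zero, mul_zero]
    simp (disch := omega) only [if_neg, add_zero]

lemma splitCount_add_three (k w : ℕ) (n : ℤ) :
    splitCount (k + 3) w n = splitCount 2 w n +
      ∑ x ∈ Ico 1 (w + 1), ∑ y ∈ Ico 1 (2 * x + 1), ∑ z ∈ Ico 1 (2 * y + 1),
        splitCount k (2 * z) (n - x - y - z) := by
  simp only [splitCount_succ_eq_ite_add (k + 2), splitCount_succ_eq_ite_add (k + 1),
    splitCount_succ_eq_ite_add k, splitCount_succ_eq_ite_add 1, splitCount_succ_eq_ite_add 0,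
    splitCount_zero, sum_add_distrib, add_assoc]

lemma splitCount_add_four_two (k : ℕ) :
    splitCount (k + 4) 2 =
      ((Set.Ico 0 7).indicator 1 + translateSum (splitCount (k + 1) 2) 7 1) +
      ((Set.Ico 2 4).indicator 1 + translateSum (splitCount (k + 1) 2) 4 8) +
      translateSum (splitCount (k + 1) 2) 3 12 + translateSum (splitCount (k + 1) 2) 4 5 +
      translateSum (wideSplitCount k 4) 4 5 + translateSum (wideSplitCount k 4) 5 1 +
      translateSum (wideSplitCount k 6) 6 4 + translateSum (wideSplitCount k 8) 7 4 +
      translateSum (wideSplitCount k 10) 10 2 + translateSum (wideSplitCount k 12) 11 2 +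
      translateSum (wideSplitCount k 14) 13 1 + translateSum (wideSplitCount k 16) 14 1 := by
  ext n
  have hwide (w : ℕ) := splitCount_succ_eq_add_wideSplitCount k (w := 2 * (1 + w)) (by omega)
  have hwide_two (n : ℤ) : wideSplitCount k 2 n = 0 := by simp [wideSplitCount]
  rw [splitCount_add_three (k + 1), splitCount_two_two]
  simp only [sum_Ico_eq_sum_range, hwide, translateSum, Pi.add_apply]
  simp only [sum_range_succ, Nat.reduceMul, Nat.reduceAdd, Nat.reduceSub, hwide_two,
    sum_range_zero, add_zero]
  push_cast
  simp only [sub_sub]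
  norm_num only
  ring

lemma reflectMono_wideSplitCount {k : ℕ} (w : ℕ)
    (h : ∀ w, 2 ≤ w → ReflectMono (4 * k - 3) (splitCount k w)) :
    ReflectMono (4 * k + 3) (wideSplitCount k w) := by
  refine ReflectMono.sum fun x hx => ?_
  have := (mem_Ico.1 hx).1
  exact (h (2 * x) (by omega)).comp_sub x (by omega)

lemma reflectMono_splitCount_succ {k : ℕ}
    (htwo : ReflectMono (4 * (k + 1 : ℕ) - 3) (splitCount (k + 1) 2))
    (h : ∀ w, 2 ≤ w → ReflectMono (4 * k - 3) (splitCount k w)) {w : ℕ} (hw : 2 ≤ w) :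
    ReflectMono (4 * (k + 1 : ℕ) - 3) (splitCount (k + 1) w) := by
  rw [funext (splitCount_succ_eq_add_wideSplitCount k hw)]
  exact htwo.add ((reflectMono_wideSplitCount w h).of_le (by omega))

lemma reflectMono_splitCount_two_of_lt_six {k : ℕ} (hk : k < 6) :
    ReflectMono (4 * k - 3) (splitCount k 2) := by
  have table : ∀ k < 6, ∀ b < 18, ∀ a : ℕ, a < b + 1 → a + b + 3 ≤ 4 * k →
      splitCount k 2 a ≤ splitCount k 2 b := by
    intro k hk
    interval_cases k <;> decide +kernel
  intro a b hab h
  obtain ha | ha := lt_or_ge a 0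
  · simp [splitCount_of_neg k 2 ha]
  lift a to ℕ using ha
  lift b to ℕ using by omega
  exact table k hk b (by omega) a (by omega) (by omega)

/- Replacing `splitCount (k + 4) 2` by three levels of its recursion costs `12 = 3 * 4` in the
bound, so translates of `splitCount (k + 1) 2` have to be centred at `6` or later, and those of
`wideSplitCount k w` at `5` or later. -/
lemma reflectMono_splitCount_add_four_two {k : ℕ} (hk : 2 ≤ k)
    (h : ∀ w, 2 ≤ w → ReflectMono (4 * k - 3) (splitCount k w))
    (hsucc : ReflectMono (4 * k + 1) (splitCount (k + 1) 2)) :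
    ReflectMono (4 * k + 13) (splitCount (k + 4) 2) := by
  have hpos {n : ℤ} (hn : 0 ≤ n) (hle : n ≤ 4 * k + 6) : 0 < splitCount (k + 1) 2 n := by
    refine splitCount_pos _ _ hn ?_
    obtain ⟨j, rfl⟩ := Nat.exists_eq_add_of_le hk
    have hpow : (j : ℤ) < 2 ^ j := mod_cast Nat.lt_two_pow_self
    rw [pow_succ, pow_add]
    push_cast at hle ⊢
    linarith
  have hneg {n : ℤ} (hn : n < 0) : splitCount (k + 1) 2 n = 0 := splitCount_of_neg _ _ hn
  have hf (c L) := hsucc.translateSum (κ' := 4 * k + 13) c L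
  have hg (w c L) := (reflectMono_wideSplitCount w h).translateSum (κ' := 4 * k + 13) c L
  have h₁ : ReflectMono (4 * k + 13)
      ((Set.Ico 0 7).indicator 1 + translateSum (splitCount (k + 1) 2) 7 1) := by
    refine (hf 7 1 (by omega)).indicator_Ico_add (fun n hn => ?_) fun n hn hle => ?_
    · simp [translateSum, hneg (show n - 7 < 0 by omega)]
    · simpa [translateSum] using hpos (show 0 ≤ n - 7 by omega) (by omega)
  have h₂ : ReflectMono (4 * k + 13)
      ((Set.Ico 2 4).indicator 1 + translateSum (splitCount (k + 1) 2) 4 8) := by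
    refine (hf 4 8 (by omega)).indicator_Ico_add (fun n hn => ?_) fun n hn hle => ?_
    · exact sum_eq_zero fun t _ => hneg (by omega)
    · obtain ⟨t, ht, hn0, hn1⟩ : ∃ t : ℕ, t < 8 ∧ 0 ≤ n - 4 - t ∧ n - 4 - t ≤ 4 * k + 6 := by
        obtain rfl | hlt := hn.eq_or_lt
        · exact ⟨0, by omega⟩
        · exact ⟨1, by omega⟩
      exact sum_pos_iff.2 ⟨t, mem_range.2 ht, hpos hn0 hn1⟩
  rw [splitCount_add_four_two]
  iterate 11 refine ReflectMono.add ?_ ?_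
  exacts [h₁, h₂, hf 3 12 (by omega), hf 4 5 (by omega), hg 4 4 5 (by omega), hg 4 5 1 (by omega),
    hg 6 6 4 (by omega), hg 8 7 4 (by omega), hg 10 10 2 (by omega), hg 12 11 2 (by omega),
    hg 14 13 1 (by omega), hg 16 14 1 (by omega)]

lemma reflectMono_splitCount (k : ℕ) :
    ∀ w, 2 ≤ w → ReflectMono (4 * k - 3) (splitCount k w) := by
  induction k using Nat.strong_induction_on with
  | _ k ih =>
    have htwo : ReflectMono (4 * k - 3) (splitCount k 2) := by
      obtain hk | hk := lt_or_ge k 6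
      · exact reflectMono_splitCount_two_of_lt_six hk
      · obtain ⟨j, rfl⟩ := Nat.exists_eq_add_of_le' (show 4 ≤ k by omega)
        have hsucc := (ih (j + 1) (by omega) 2 le_rfl).of_le (κ' := 4 * j + 1) (by omega)
        exact (reflectMono_splitCount_add_four_two (by omega) (ih j (by omega)) hsucc).of_le
          (by omega)
    intro w hw
    cases k with
    | zero =>
      intro a b hab h
      simp [splitCount_of_neg 0 w (show a < 0 by push_cast at h; omega)]
    | succ k => exact reflectMono_splitCount_succ htwo (ih k k.lt_succ_self) hw

lemma two_mul_le_two_pow (k : ℕ) : 2 * k ≤ 2 ^ k := by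
  cases k with
  | zero => simp
  | succ j =>
    rw [pow_succ']
    exact Nat.mul_le_mul_left 2 Nat.lt_two_pow_self

lemma reflectMono_splitCount_one (m : ℕ) : ReflectMono (4 * m - 5) (splitCount m 1) := by
  cases m with
  | zero =>
    intro a b hab h
    simp [splitCount_of_neg 0 1 (show a < 0 by push_cast at h; omega)]
  | succ k =>
    rw [splitCount_succ_one]
    refine ((reflectMono_splitCount k 2 le_rfl).comp_sub 1
      (by push_cast; omega)).indicator_Ico_add (fun n hn => ?_) fun n hn hle => ?_
    · exact splitCount_of_neg _ _ (by omega)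
    · refine splitCount_pos _ _ (by omega) ?_
      have hpow : 2 * (k : ℤ) ≤ 2 ^ k := mod_cast two_mul_le_two_pow k
      push_cast at hle ⊢
      linarith

/-- The multisets of exponents at most `k` that describe an expansion of `w * 2 ^ k` obtained from
`w` copies of `2 ^ k` by `n` halvings. -/
def boundedExpansions (k w : ℕ) (n : ℤ) : Set (Multiset ℕ) :=
  {b | (∀ i ∈ b, i ≤ k) ∧ (b.card : ℤ) = w + n ∧ (b.map fun i => 2 ^ i).sum = w * 2 ^ k}

lemma setOf_expansions_eq_boundedExpansions (m r : ℕ) :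
    {b : Multiset ℕ | b.card = r ∧ (b.map fun i => 2 ^ i).sum = 2 ^ m} =
      boundedExpansions m 1 (r - 1) := by
  ext b
  have hle (hsum : (b.map fun i => 2 ^ i).sum = 2 ^ m) (i : ℕ) (hi : i ∈ b) : i ≤ m := by
    refine (Nat.pow_le_pow_iff_right one_lt_two).1 (hsum ▸ ?_)
    exact Multiset.single_le_sum (fun _ _ => Nat.zero_le _) _ (Multiset.mem_map_of_mem _ hi)
  simp only [boundedExpansions, Set.mem_ofPred_eq, Nat.cast_one, one_mul, add_sub_cancel,
    Nat.cast_inj]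
  tauto

lemma boundedExpansions_zero (w : ℕ) (n : ℤ) :
    boundedExpansions 0 w n = if n = 0 then {Multiset.replicate w 0} else ∅ := by
  have hzero (b : Multiset ℕ) (hb : ∀ i ∈ b, i ≤ 0) (hsum : (b.map fun i => 2 ^ i).sum = w) :
      b = Multiset.replicate w 0 := by
    have hrep := Multiset.eq_replicate_card.2 fun i hi => Nat.le_zero.1 (hb i hi)
    rw [hrep] at hsum
    rwa [← show b.card = w by simpa using hsum]
  split_ifs with hn
  · ext b
    subst hn
    refine ⟨fun ⟨hb, _, hsum⟩ => hzero b hb (by simpa using hsum), ?_⟩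
    rintro rfl
    simp [boundedExpansions, Multiset.mem_replicate]
  · refine Set.eq_empty_of_forall_notMem fun b ⟨hb, hcard, hsum⟩ => hn ?_
    rw [hzero b hb (by simpa using hsum), Multiset.card_replicate] at hcard
    omega

lemma add_replicate_mem_boundedExpansions_iff {k : ℕ} {b : Multiset ℕ} (hb : ∀ i ∈ b, i ≤ k)
    (x c : ℕ) (n : ℤ) :
    b + Multiset.replicate c (k + 1) ∈ boundedExpansions (k + 1) (x + c) n ↔
      b ∈ boundedExpansions k (2 * x) (n - x) := by
  have hle : ∀ i ∈ b + Multiset.replicate c (k + 1), i ≤ k + 1 := by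
    intro i hi
    obtain hi | hi := Multiset.mem_add.1 hi
    · exact (hb i hi).trans k.le_succ
    · exact (Multiset.eq_of_mem_replicate hi).le
  have hcard : ((b + Multiset.replicate c (k + 1)).card : ℤ) = (x + c : ℕ) + n ↔
      (b.card : ℤ) = (2 * x : ℕ) + (n - x) := by
    rw [Multiset.card_add, Multiset.card_replicate]
    omega
  have hsum : ((b + Multiset.replicate c (k + 1)).map fun i => 2 ^ i).sum =
      (x + c) * 2 ^ (k + 1) ↔ (b.map fun i => 2 ^ i).sum = 2 * x * 2 ^ k := by
    rw [Multiset.map_add, Multiset.map_replicate, Multiset.sum_add, Multiset.sum_replicate,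
      smul_eq_mul, add_mul, add_left_inj, pow_succ', mul_assoc, mul_left_comm]
  exact and_congr (iff_of_true hle hb) (and_congr hcard hsum)

lemma filter_le_add_replicate_count {k : ℕ} {b : Multiset ℕ} (hb : ∀ i ∈ b, i ≤ k + 1) :
    b.filter (· ≤ k) + Multiset.replicate (b.count (k + 1)) (k + 1) = b := by
  have htop : b.filter (· = k + 1) = b.filter (¬ · ≤ k) :=
    Multiset.filter_congr fun i hi => by have := hb i hi; omega
  rw [← Multiset.filter_eq', htop, Multiset.filter_add_not]

lemma count_le_of_sum_two_pow_eq {j w : ℕ} {b : Multiset ℕ}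
    (hb : (b.map fun i => 2 ^ i).sum = w * 2 ^ j) : b.count j ≤ w := by
  refine Nat.le_of_mul_le_mul_right ?_ (Nat.two_pow_pos j)
  obtain ⟨u, hu⟩ := Multiset.le_iff_exists_add.1 (Multiset.le_count_iff_replicate_le.1 le_rfl :
    Multiset.replicate (b.count j) j ≤ b)
  calc b.count j * 2 ^ j = ((Multiset.replicate (b.count j) j).map fun i => 2 ^ i).sum := by simp
    _ ≤ ((Multiset.replicate (b.count j) j + u).map fun i => 2 ^ i).sum := by
      rw [Multiset.map_add, Multiset.sum_add]
      exact Nat.le_add_right _ _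
    _ = (b.map fun i => 2 ^ i).sum := by rw [← hu]
    _ = w * 2 ^ j := hb

lemma boundedExpansions_succ (k w : ℕ) (n : ℤ) :
    boundedExpansions (k + 1) w n = ⋃ x ∈ (range (w + 1) : Set ℕ),
      (· + Multiset.replicate (w - x) (k + 1)) '' boundedExpansions k (2 * x) (n - x) := by
  ext b
  simp only [Set.mem_iUnion, Set.mem_image, mem_coe, mem_range, exists_prop]
  constructor
  · intro hb
    have hc := count_le_of_sum_two_pow_eq hb.2.2
    obtain ⟨x, hx⟩ := Nat.exists_eq_add_of_le' hc
    have hdecomp := filter_le_add_replicate_count hb.1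
    refine ⟨x, by omega, b.filter (· ≤ k), ?_, by rwa [hx, Nat.add_sub_cancel_left]⟩
    rw [← add_replicate_mem_boundedExpansions_iff (fun i hi => (Multiset.mem_filter.1 hi).2) x
      (b.count (k + 1)), hdecomp, ← hx]
    exact hb
  · rintro ⟨x, hx, b, hb, rfl⟩
    have := (add_replicate_mem_boundedExpansions_iff hb.1 x (w - x) n).2 hb
    rwa [Nat.add_sub_cancel' (by omega)] at this

lemma count_add_replicate_of_mem_boundedExpansions {k w : ℕ} {n : ℤ} {b : Multiset ℕ}
    (hb : b ∈ boundedExpansions k w n) (c : ℕ) :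
    (b + Multiset.replicate c (k + 1)).count (k + 1) = c := by
  have : b.count (k + 1) = 0 := Multiset.count_eq_zero.2 fun h => by have := hb.1 _ h; omega
  rw [Multiset.count_add, this, Multiset.count_replicate_self, zero_add]

lemma encard_boundedExpansions (k w : ℕ) (n : ℤ) :
    (boundedExpansions k w n).encard = splitCount k w n := by
  induction k generalizing w n with
  | zero =>
    rw [boundedExpansions_zero, splitCount_zero]
    split_ifs <;> simp
  | succ k ih =>
    rw [boundedExpansions_succ, (finite_toSet _).encard_biUnion, finsum_mem_coe_finset, splitCount,
      Nat.cast_sum]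
    · refine sum_congr rfl fun x _ => ?_
      rw [(add_left_injective _).encard_image, ih]
    · intro x hx y hy hxy
      refine Set.disjoint_left.2 ?_
      rintro _ ⟨b, hb, rfl⟩ ⟨b', hb', heq⟩
      have hcount := congrArg (Multiset.count (k + 1)) heq
      simp only [count_add_replicate_of_mem_boundedExpansions hb,
        count_add_replicate_of_mem_boundedExpansions hb'] at hcount
      simp only [coe_range, Set.mem_Iio] at hx hy
      omega

theorem card_expansions_le_general (m r r' : ℕ) (hr : r ≤ r') (h : r + r' + 3 ≤ 4 * m) :
    {b : Multiset ℕ | b.card = r ∧ (b.map fun i => 2 ^ i).sum = 2 ^ m}.ncard ≤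
      {b : Multiset ℕ | b.card = r' ∧ (b.map fun i => 2 ^ i).sum = 2 ^ m}.ncard := by
  simp only [setOf_expansions_eq_boundedExpansions, Set.ncard, encard_boundedExpansions,
    ENat.toNat_natCast]
  exact reflectMono_splitCount_one m (by omega) (by omega)

/-- For `m ≥ 4`, the number of expansions of `2^m` of length `2m − 2` is at most the
number of expansions of `2^m` of length `2m − 1`, where an expansion of `N` of length
`r` is a multiset `b` of naturals with `card b = r` and `∑_{i ∈ b} 2^i = N`. -/
theorem card_expansions_le (m : ℕ) (hm : 4 ≤ m) :
    {b : Multiset ℕ | Multiset.card b = 2 * m - 2 ∧ (b.map fun i => 2 ^ i).sum = 2 ^ m}.ncard ≤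
      {b : Multiset ℕ | Multiset.card b = 2 * m - 1 ∧ (b.map fun i => 2 ^ i).sum = 2 ^ m}.ncard :=
  card_expansions_le_general m _ _ (by omega) (by omega)
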